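/- arXiv:math/0409323 — 3 statements merged into one kernel-verified Lean document; each statement's English description precedes it below -/
import Mathlib

section
/- For every n ≥ 1, the polynomial f_n(t) = Σ_{F ∈ ℱ_n} t^{pv(F)} satisfies f_n(t) = t · Π_{i=1}^{n−1} ((i+1)·t + (n − i)). -/
/-- The vertex set `[n] = {1,…,n}`. -/
def Vn (n : ℕ) : Type := {v : ℕ // v ∈ Finset.Icc 1 n}

/-- A parent function on `[n]` encodes a forest of rooted trees iff following parents
always terminates, i.e. the "is parent of" relation is well-founded (equivalently, the
functional graph is acyclic, so every connected component is a rooted tree; the roots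
are the vertices with parent `none`). -/
def IsForest {n : ℕ} (p : Vn n → Option (Vn n)) : Prop :=
  WellFounded fun a b => p b = some a

/-- `w` is a descendant of `v` iff `v` lies on the path from `w` to its root, i.e. `v`
is reachable from `w` by iterating the parent function.  A vertex `v` is *proper* if it
is the smallest among its descendants (including itself); `pvF p` is the number of
proper vertices. -/
noncomputable def pvF {n : ℕ} (p : Vn n → Option (Vn n)) : ℕ :=
  Set.ncard {v : Vn n |
    ∀ w : Vn n, Relation.ReflTransGen (fun x y => p x = some y) w v → v.1 ≤ w.1}

/-- `ℱ_n`: the forests on `[n]`. -/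
def Fo (n : ℕ) : Type := {p : Vn n → Option (Vn n) // IsForest p}

/-!
Let `D` be a set of `k` vertices whose `c` outside vertices are sinks, let `m` be the smallest
vertex of `D`, and fix a sink `s`. Weigh each forest by `t` to the number of its proper vertices.
The total weight `T k c` of the forests on `D` in which the path from `m` ends at `s` depends only
on `k` and `c`, so that all forests on `D` together have weight `c * T k c`.
To evaluate it, cut `m` off from its parent `x`, so that `m` becomes one more sink.
* If `x = s`, what remains is an arbitrary forest on `k - 1` vertices with `c + 1` sinks, and `m`
  was one additional proper vertex.
* Otherwise `x` is one of the `k - 1` other vertices and its path ends at `s`. On the path from `m`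
  only `m` was proper, so if `x` inherits the label of `m`, then `x` takes over the role of `m` and
  the number of proper vertices is unchanged.

Hence `T k c = ((c + 1) * t + (k - 1)) * T (k - 1) (c + 1)`.
-/

open Function Relation Finset

section Leads

variable {V : Type*} {p q : V → V} {v w m x s : V}

/-- `Leads p w v`: iterating `p` from `w` eventually reaches `v`, i.e. `w` is a descendant of `v`
when `p` is read as a parent function. -/
def Leads (p : V → V) : V → V → Prop :=
  ReflTransGen fun x y => p x = y

theorem Leads.eq_of_isFixedPt_left (h : Leads p v w) (hv : IsFixedPt p v) : w = v := by
  induction h with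
  | refl => rfl
  | tail _ hstep ih => rw [← hstep, ih, hv]

theorem Leads.eq_of_isFixedPt_right (hv : Leads p x v) (hw : Leads p x w) (hpv : IsFixedPt p v)
    (hpw : IsFixedPt p w) : v = w := by
  have right_unique : Relator.RightUnique fun x y => p x = y := fun _ _ _ h h' =>
    h.symm.trans h'
  rcases ReflTransGen.total_of_right_unique right_unique hv hw with h | h
  · exact (Leads.eq_of_isFixedPt_left h hpv).symm
  · exact Leads.eq_of_isFixedPt_left h hpw

theorem leads_symm_of_cycle (hcycle : Leads p (p m) m) (h : Leads p m v) : Leads p v m := by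
  induction h with
  | refl => exact .refl
  | tail _ hstep ih =>
    subst hstep
    rcases ReflTransGen.cases_head ih with rfl | ⟨_, rfl, h⟩
    · exact hcycle
    · exact h

variable [DecidableEq V]

theorem Leads.attach (hm : IsFixedPt q m) (h : Leads q w v) : Leads (update q m x) w v := by
  induction h using ReflTransGen.head_induction_on with
  | refl => exact .refl
  | @head a b hab _ ih =>
    by_cases ham : a = m
    · subst ham
      rwa [← hab, hm.eq] at ih
    · exact ih.head (by rwa [update_of_ne ham])

theorem leads_update_iff (hm : IsFixedPt q m) (hx : ¬Leads q x m) :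
    Leads (update q m x) w v ↔ Leads q w v ∨ Leads q w m ∧ Leads q x v := by
  constructor
  · intro h
    induction h using ReflTransGen.head_induction_on with
    | refl => exact .inl .refl
    | @head a b hab _ ih =>
      by_cases ham : a = m
      · subst ham
        rw [update_self] at hab
        subst hab
        exact .inr ⟨.refl, ih.elim id fun h => absurd h.1 hx⟩
      · rw [update_of_ne ham] at hab
        exact ih.imp (.head hab) fun h => ⟨.head hab h.1, h.2⟩
  · rintro (h | ⟨hwm, hxv⟩)
    · exact h.attach hm
    · exact ReflTransGen.trans (hwm.attach hm) (.head (update_self ..) (hxv.attach hm))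

theorem leads_update_left_iff (hm : IsFixedPt q m) (hx : ¬Leads q x m) :
    Leads (update q m x) m v ↔ v = m ∨ Leads q x v := by
  have hmv : Leads q m v ↔ v = m := ⟨fun h => h.eq_of_isFixedPt_left hm, fun h => h ▸ .refl⟩
  rw [leads_update_iff hm hx, hmv]
  exact or_congr_right (and_iff_right .refl)

theorem Leads.cut (h : Leads p w v) :
    Leads (update p m m) w v ∨ Leads (update p m m) w m := by
  induction h using ReflTransGen.head_induction_on with
  | refl => exact .inl .refl
  | @head a b hab _ ih =>
    by_cases ham : a = m
    · exact .inr (ham ▸ .refl)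
    · have step : update p m m a = b := by rwa [update_of_ne ham]
      exact ih.imp (.head step) (.head step)

end Leads

section IsForestOn

variable {V : Type*} {D : Finset V} {p q : V → V} {v w m x s : V}

/-- The parent function `p` describes a forest on the vertices in `D` whose trees hang from the
vertices outside `D`. The latter act as sinks, encoded as fixed points of `p`. -/
structure IsForestOn (D : Finset V) (p : V → V) : Prop where
  isFixedPt : ∀ v ∉ D, IsFixedPt p v
  exists_leads : ∀ v, ∃ s ∉ D, Leads p v s

namespace IsForestOn

theorem sink_unique {s' : V} (hp : IsForestOn D p) (hs : s ∉ D) (hs' : s' ∉ D) (h : Leads p v s)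
    (h' : Leads p v s') : s = s' :=
  h.eq_of_isFixedPt_right h' (hp.isFixedPt s hs) (hp.isFixedPt s' hs')

theorem mem_of_leads (hp : IsForestOn D p) (hv : v ∈ D) (h : Leads p w v) : w ∈ D := by
  by_contra hw
  exact hw (h.eq_of_isFixedPt_left (hp.isFixedPt w hw) ▸ hv)

theorem not_leads_apply_self (hp : IsForestOn D p) (hm : m ∈ D) : ¬Leads p (p m) m := by
  intro hcycle
  obtain ⟨s, hs, hms⟩ := hp.exists_leads m
  have : m = s := (leads_symm_of_cycle hcycle hms).eq_of_isFixedPt_left (hp.isFixedPt s hs)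
  exact hs (this ▸ hm)

variable [DecidableEq V]

theorem cut (hp : IsForestOn D p) (m : V) : IsForestOn (D.erase m) (update p m m) where
  isFixedPt v hv := by
    by_cases hvm : v = m
    · rw [hvm, IsFixedPt, update_self]
    · rw [IsFixedPt, update_of_ne hvm]
      exact hp.isFixedPt v fun h => hv (mem_erase.2 ⟨hvm, h⟩)
  exists_leads v := by
    obtain ⟨s, hs, hvs⟩ := hp.exists_leads v
    rcases hvs.cut (m := m) with h | h
    · exact ⟨s, fun h => hs (mem_of_mem_erase h), h⟩
    · exact ⟨m, notMem_erase m D, h⟩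

theorem not_leads_cut (hp : IsForestOn D p) (hm : m ∈ D) : ¬Leads (update p m m) (p m) m := by
  intro h
  have := h.attach (x := p m) (update_self ..)
  rw [update_idem, update_eq_self] at this
  exact hp.not_leads_apply_self hm this

theorem attach (hq : IsForestOn (D.erase m) q) (hm : m ∈ D) (hx : ¬Leads q x m) :
    IsForestOn D (update q m x) where
  isFixedPt v hv := by
    have hvm : v ≠ m := by
      rintro rfl
      exact hv hm
    rw [IsFixedPt, update_of_ne hvm]
    exact hq.isFixedPt v fun h => hv (mem_of_mem_erase h)
  exists_leads v := by
    have hfix : IsFixedPt q m := hq.isFixedPt m (notMem_erase m D)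
    have notMem {s} (hs : s ∉ D.erase m) (hsm : s ≠ m) : s ∉ D := fun h =>
      hs (mem_erase.2 ⟨hsm, h⟩)
    obtain ⟨s, hs, hvs⟩ := hq.exists_leads v
    by_cases hsm : s = m
    · subst hsm
      obtain ⟨r, hr, hxr⟩ := hq.exists_leads x
      exact ⟨r, notMem hr fun h => hx (h ▸ hxr), (leads_update_iff hfix hx).2 (.inr ⟨hvs, hxr⟩)⟩
    · exact ⟨s, notMem hs hsm, hvs.attach hfix⟩

end IsForestOn

end IsForestOn

section Relabel

variable {V β : Type*} [DecidableEq V] {f : V → β} {D : Finset V} {m : V}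

theorem injOn_update_erase (hf : Set.InjOn f D) (hm : m ∈ D) (x : V) :
    Set.InjOn (update f x (f m)) (D.erase m) := by
  intro v hv w hw hvw
  rw [mem_coe, mem_erase] at hv hw
  have ne_min {u} (hu : u ≠ m ∧ u ∈ D) : f u ≠ f m := fun h => hu.1 (hf hu.2 hm h)
  by_cases hvx : v = x <;> by_cases hwx : w = x
  · rw [hvx, hwx]
  · rw [hvx, update_self, update_of_ne hwx] at hvw
    exact absurd hvw.symm (ne_min hw)
  · rw [hwx, update_self, update_of_ne hvx] at hvw
    exact absurd hvw (ne_min hv)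
  · rw [update_of_ne hvx, update_of_ne hwx] at hvw
    exact hf hv.2 hw.2 hvw

theorem update_self_le_update [Preorder β] (hmin : ∀ v ∈ D, f m ≤ f v) (x : V) :
    ∀ v ∈ D.erase m, update f x (f m) x ≤ update f x (f m) v := by
  intro v hv
  rw [update_self, update_apply]
  split
  · exact le_rfl
  · exact hmin v (mem_of_mem_erase hv)

end Relabel

section Proper

variable {V β : Type*} [LinearOrder β] {f : V → β} {D : Finset V} {p q : V → V} {v m x s : V}

/-- `v` carries the smallest label among its descendants. Labels are given by a function `f` rather
than by an order on `V`, so that a vertex can be relabelled. -/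
def IsProper (f : V → β) (p : V → V) (v : V) : Prop :=
  ∀ w, Leads p w v → f v ≤ f w

open Classical in
/-- The set of proper vertices of the forest `p` on `D`. -/
noncomputable def properVertices (f : V → β) (D : Finset V) (p : V → V) : Finset V :=
  D.filter (IsProper f p)

theorem mem_properVertices : v ∈ properVertices f D p ↔ v ∈ D ∧ IsProper f p v := by
  simp [properVertices]

open Classical in
/-- The set of proper vertices of the forest `p` on `D` that do not lie on the path from `x`. -/
noncomputable def properVerticesOffPath (f : V → β) (D : Finset V) (p : V → V) (x : V) : Finset V :=
  (properVertices f D p).filter fun v => ¬Leads p x v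

theorem mem_properVerticesOffPath :
    v ∈ properVerticesOffPath f D p x ↔ v ∈ D ∧ IsProper f p v ∧ ¬Leads p x v := by
  simp [properVerticesOffPath, mem_properVertices, and_assoc]

theorem card_properVertices (hp : IsForestOn D p) (hf : Set.InjOn f D) (hm : m ∈ D)
    (hmin : ∀ v ∈ D, f m ≤ f v) :
    #(properVertices f D p) = #(properVerticesOffPath f D p m) + 1 := by
  classical
  rw [← card_insert_of_notMem (a := m) fun h => (mem_properVerticesOffPath.1 h).2.2 .refl]
  congr 1
  ext v
  rw [mem_insert, mem_properVertices, mem_properVerticesOffPath]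
  constructor
  · rintro ⟨hv, hproper⟩
    by_cases hmv : Leads p m v
    · exact .inl (hf hv hm ((hproper m hmv).antisymm (hmin v hv)))
    · exact .inr ⟨hv, hproper, hmv⟩
  · rintro (rfl | ⟨hv, hproper, -⟩)
    · exact ⟨hm, fun w hw => hmin w (hp.mem_of_leads hm hw)⟩
    · exact ⟨hv, hproper⟩

theorem properVerticesOffPath_sink (hp : IsForestOn D p) (hs : s ∉ D) :
    properVerticesOffPath f D p s = properVertices f D p := by
  ext v
  rw [mem_properVerticesOffPath, mem_properVertices, ← and_assoc]
  exact and_iff_left_of_imp fun hv hsv => hs (hp.mem_of_leads hv.1 hsv)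

variable [DecidableEq V]

theorem isProper_update_iff (hm : IsFixedPt q m) (hx : ¬Leads q x m) (hv : ¬Leads q x v) :
    IsProper f (update q m x) v ↔ IsProper f q v := by
  simp only [IsProper, leads_update_iff hm hx, hv, and_false, or_false]

theorem isProper_update_label_iff (b : β) (hv : ¬Leads p x v) :
    IsProper (update f x b) p v ↔ IsProper f p v := by
  refine forall₂_congr fun w hw => ?_
  have ne_of_leads {u} (hu : Leads p u v) : u ≠ x := fun h => hv (h ▸ hu)
  rw [update_of_ne (ne_of_leads .refl), update_of_ne (ne_of_leads hw)]

theorem properVerticesOffPath_update_label (b : β) :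
    properVerticesOffPath (update f x b) D p x = properVerticesOffPath f D p x := by
  ext v
  simp only [mem_properVerticesOffPath]
  exact and_congr_right fun _ => and_congr_left fun hv => isProper_update_label_iff b hv

theorem properVerticesOffPath_attach (hm : IsFixedPt q m) (hx : ¬Leads q x m) :
    properVerticesOffPath f D (update q m x) m = properVerticesOffPath f (D.erase m) q x := by
  ext v
  simp only [mem_properVerticesOffPath, mem_erase, leads_update_left_iff hm hx, not_or]
  constructor
  · rintro ⟨hv, hproper, hvm, hxv⟩
    exact ⟨⟨hvm, hv⟩, (isProper_update_iff hm hx hxv).1 hproper, hxv⟩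
  · rintro ⟨⟨hvm, hv⟩, hproper, hxv⟩
    exact ⟨hv, (isProper_update_iff hm hx hxv).2 hproper, hvm, hxv⟩

theorem card_properVertices_attach (hq : IsForestOn (D.erase m) q) (hf : Set.InjOn f D)
    (hm : m ∈ D) (hmin : ∀ v ∈ D, f m ≤ f v) (hx : ¬Leads q x m) :
    #(properVertices f D (update q m x)) = #(properVerticesOffPath f (D.erase m) q x) + 1 := by
  rw [card_properVertices (hq.attach hm hx) hf hm hmin,
    properVerticesOffPath_attach (hq.isFixedPt m (notMem_erase m D)) hx]

theorem card_properVertices_attach_vertex (hq : IsForestOn (D.erase m) q) (hf : Set.InjOn f D)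
    (hm : m ∈ D) (hmin : ∀ v ∈ D, f m ≤ f v) (hx : ¬Leads q x m) (hxD : x ∈ D.erase m) :
    #(properVertices f D (update q m x)) =
      #(properVertices (update f x (f m)) (D.erase m) q) := by
  rw [card_properVertices_attach hq hf hm hmin hx, card_properVertices hq
    (injOn_update_erase hf hm x) hxD (update_self_le_update hmin x),
    properVerticesOffPath_update_label]

end Proper

section WeightedCount

variable {V β R : Type*} [Fintype V] [DecidableEq V] [LinearOrder β] [CommSemiring R]
  {f : V → β} {D : Finset V} {m s x : V}

open Classical in
/-- The set of all forests on `D`. -/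
noncomputable def forestsOn (D : Finset V) : Finset (V → V) :=
  univ.filter (IsForestOn D)

open Classical in
/-- The set of forests on `D` in which the path from `v` passes through, or ends at, `s`. -/
noncomputable def forestsLeading (D : Finset V) (v s : V) : Finset (V → V) :=
  (forestsOn D).filter (Leads · v s)

theorem mem_forestsOn {p : V → V} : p ∈ forestsOn D ↔ IsForestOn D p := by
  simp [forestsOn]

theorem mem_forestsLeading {p : V → V} {v : V} :
    p ∈ forestsLeading D v s ↔ IsForestOn D p ∧ Leads p v s := by
  simp [forestsLeading, mem_forestsOn]

theorem forestsOn_empty : forestsOn (∅ : Finset V) = {id} := by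
  ext p
  rw [mem_forestsOn, mem_singleton]
  constructor
  · exact fun hp => funext fun v => hp.isFixedPt v (notMem_empty v)
  · rintro rfl
    exact ⟨fun v _ => isFixedPt_id v, fun v => ⟨v, notMem_empty v, .refl⟩⟩

theorem sum_forestsLeading_sinks (g : (V → V) → R) (D : Finset V) (v : V) :
    ∑ s ∈ Dᶜ, ∑ p ∈ forestsLeading D v s, g p = ∑ p ∈ forestsOn D, g p := by
  classical
  rw [← sum_biUnion]
  · congr 1
    ext p
    simp only [mem_biUnion, mem_compl, mem_forestsLeading, mem_forestsOn]
    constructor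
    · rintro ⟨_, _, hp, _⟩
      exact hp
    · intro hp
      obtain ⟨s, hs, hvs⟩ := hp.exists_leads v
      exact ⟨s, hs, hp, hvs⟩
  · intro s hs s' hs' hne
    rw [mem_coe, mem_compl] at hs hs'
    refine disjoint_left.2 fun p hp hp' => hne ?_
    rw [mem_forestsLeading] at hp hp'
    exact hp.1.sink_unique hs hs' hp.2 hp'.2

theorem sum_forestsOn_eq_card_mul {g : (V → V) → R} {B : R} (v : V)
    (hg : ∀ s ∉ D, ∑ p ∈ forestsLeading D v s, g p = B) :
    ∑ p ∈ forestsOn D, g p = #Dᶜ * B := by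
  rw [← sum_forestsLeading_sinks g D v, ← nsmul_eq_mul]
  exact sum_eq_card_nsmul fun s hs => hg s (mem_compl.1 hs)

theorem sum_forestsLeading_parent (g : (V → V) → R) (hm : m ∈ D) (hs : s ∉ D) (x : V) :
    ∑ p ∈ forestsLeading D m s with p m = x, g p =
      ∑ q ∈ forestsLeading (D.erase m) x s, g (update q m x) := by
  have hsm : s ≠ m := fun h => hs (h ▸ hm)
  have hs' : s ∉ D.erase m := fun h => hs (mem_of_mem_erase h)
  refine sum_nbij' (fun p => update p m m) (fun q => update q m x) ?_ ?_ ?_ ?_ ?_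
  · intro p hp
    rw [mem_filter, mem_forestsLeading] at hp
    obtain ⟨⟨hp, hleads⟩, rfl⟩ := hp
    have hattach := leads_update_left_iff (v := s) (update_self ..) (hp.not_leads_cut hm)
    rw [update_idem, update_eq_self] at hattach
    exact mem_forestsLeading.2 ⟨hp.cut m, (hattach.1 hleads).resolve_left hsm⟩
  · intro q hq
    obtain ⟨hq, hleads⟩ := mem_forestsLeading.1 hq
    have hfix : IsFixedPt q m := hq.isFixedPt m (notMem_erase m D)
    have hxm : ¬Leads q x m := fun h => hsm (hq.sink_unique hs' (notMem_erase m D) hleads h)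
    rw [mem_filter, mem_forestsLeading]
    exact ⟨⟨hq.attach hm hxm, (leads_update_left_iff hfix hxm).2 (.inr hleads)⟩, update_self ..⟩
  · intro p hp
    rw [update_idem, ← (mem_filter.1 hp).2, update_eq_self]
  · intro q hq
    have hfix : q m = m := (mem_forestsLeading.1 hq).1.isFixedPt m (notMem_erase m D)
    rw [update_idem, update_eq_iff]
    exact ⟨hfix.symm, fun _ _ => rfl⟩
  · intro p hp
    rw [update_idem, ← (mem_filter.1 hp).2, update_eq_self]

theorem forestsLeading_self (D : Finset V) (s : V) : forestsLeading D s s = forestsOn D := by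
  ext p
  rw [mem_forestsLeading, mem_forestsOn]
  exact and_iff_left .refl

theorem forestsLeading_sink_of_ne (hx : x ∉ D) (hxs : x ≠ s) : forestsLeading D x s = ∅ := by
  refine eq_empty_of_forall_notMem fun p hp => hxs ?_
  obtain ⟨hp, hleads⟩ := mem_forestsLeading.1 hp
  exact (hleads.eq_of_isFixedPt_left (hp.isFixedPt x hx)).symm

theorem sum_forestsLeading_cut (t : R) (hf : Set.InjOn f D) (hm : m ∈ D)
    (hmin : ∀ v ∈ D, f m ≤ f v) (hs : s ∉ D) :
    ∑ p ∈ forestsLeading D m s, t ^ #(properVertices f D p) =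
      t * ∑ q ∈ forestsOn (D.erase m), t ^ #(properVertices f (D.erase m) q) +
        ∑ x ∈ D.erase m, ∑ q ∈ forestsLeading (D.erase m) x s,
          t ^ #(properVertices (update f x (f m)) (D.erase m) q) := by
  have hs' : s ∉ D.erase m := fun h => hs (mem_of_mem_erase h)
  have sink_parent :
      ∑ q ∈ forestsLeading (D.erase m) s s, t ^ #(properVertices f D (update q m s)) =
      t * ∑ q ∈ forestsOn (D.erase m), t ^ #(properVertices f (D.erase m) q) := by
    rw [forestsLeading_self, mul_sum]
    refine sum_congr rfl fun q hq => ?_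
    have hq := mem_forestsOn.1 hq
    have hsm : ¬Leads q s m := fun h =>
      hs (hq.sink_unique hs' (notMem_erase m D) .refl h ▸ hm)
    rw [card_properVertices_attach hq hf hm hmin hsm, properVerticesOffPath_sink hq hs', pow_succ']
  have vertex_parent : ∀ x ∈ D.erase m,
      ∑ q ∈ forestsLeading (D.erase m) x s, t ^ #(properVertices f D (update q m x)) =
        ∑ q ∈ forestsLeading (D.erase m) x s,
          t ^ #(properVertices (update f x (f m)) (D.erase m) q) := by
    intro x hx
    refine sum_congr rfl fun q hq => ?_
    obtain ⟨hq, hleads⟩ := mem_forestsLeading.1 hq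
    have hxm : ¬Leads q x m := fun h =>
      hs (hq.sink_unique hs' (notMem_erase m D) hleads h ▸ hm)
    rw [card_properVertices_attach_vertex hq hf hm hmin hxm hx]
  have other_parent : ∀ x, x ∉ insert s (D.erase m) →
      ∑ q ∈ forestsLeading (D.erase m) x s, t ^ #(properVertices f D (update q m x)) = 0 := by
    intro x hx
    rw [mem_insert, not_or] at hx
    rw [forestsLeading_sink_of_ne hx.2 hx.1, sum_empty]
  rw [← sum_fiberwise _ fun p => p m]
  simp only [sum_forestsLeading_parent _ hm hs]
  rw [← sum_subset (subset_univ _) fun x _ => other_parent x, sum_insert hs', sink_parent,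
    sum_congr rfl vertex_parent]

theorem sum_forestsLeading (t : R) (k : ℕ) (hD : #D = k + 1) (hf : Set.InjOn f D) (hm : m ∈ D)
    (hmin : ∀ v ∈ D, f m ≤ f v) (hs : s ∉ D) :
    ∑ p ∈ forestsLeading D m s, t ^ #(properVertices f D p) =
      t * ∏ i ∈ range k, (((#Dᶜ + 1 + i : ℕ) : R) * t + ((k - i : ℕ) : R)) := by
  induction k generalizing D f m s with
  | zero =>
    have hempty : D.erase m = ∅ := by rw [← card_eq_zero, card_erase_of_mem hm, hD]
    rw [sum_forestsLeading_cut t hf hm hmin hs, hempty, forestsOn_empty]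
    simp [properVertices]
  | succ k ih =>
    have hcard : #(D.erase m) = k + 1 := by rw [card_erase_of_mem hm, hD, Nat.add_sub_cancel]
    have hsinks : #(D.erase m)ᶜ = #Dᶜ + 1 := by
      rw [compl_erase, card_insert_of_notMem (notMem_compl.2 hm)]
    have hf' : Set.InjOn f (D.erase m) := hf.mono (coe_subset.2 (erase_subset m D))
    obtain ⟨m', hm', hmin'⟩ := exists_min_image (D.erase m) f (card_pos.1 (by omega))
    set B : R := t * ∏ i ∈ range k, (((#Dᶜ + 1 + 1 + i : ℕ) : R) * t + ((k - i : ℕ) : R)) with hB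
    have all_forests : ∑ q ∈ forestsOn (D.erase m), t ^ #(properVertices f (D.erase m) q) =
        ((#Dᶜ + 1 : ℕ) : R) * B := by
      rw [sum_forestsOn_eq_card_mul m' fun s hs => ih hcard hf' hm' hmin' hs, hsinks]
    have relabelled : ∀ x ∈ D.erase m, ∑ q ∈ forestsLeading (D.erase m) x s,
        t ^ #(properVertices (update f x (f m)) (D.erase m) q) = B := by
      intro x hx
      rw [ih hcard (injOn_update_erase hf hm x) hx (update_self_le_update hmin x)
        fun h => hs (mem_of_mem_erase h), hsinks]
    rw [sum_forestsLeading_cut t hf hm hmin hs, all_forests, sum_congr rfl relabelled, sum_const,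
      hcard, nsmul_eq_mul, prod_range_succ', hB]
    simp only [Nat.add_sub_add_right, Nat.add_right_comm _ _ 1, ← Nat.add_assoc]
    push_cast
    ring

theorem sum_forestsOn (t : R) (k : ℕ) (hD : #D = k + 1) (hf : Set.InjOn f D) :
    ∑ p ∈ forestsOn D, t ^ #(properVertices f D p) =
      #Dᶜ * (t * ∏ i ∈ range k, (((#Dᶜ + 1 + i : ℕ) : R) * t + ((k - i : ℕ) : R))) := by
  obtain ⟨m, hm, hmin⟩ := exists_min_image D f (card_pos.1 (by omega))
  exact sum_forestsOn_eq_card_mul m fun s hs => sum_forestsLeading t k hD hf hm hmin hs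

end WeightedCount

section PartialParent

variable {α : Type*} {p : α → Option α}

/-- The parent function on `Option α` obtained from `p` by turning `none` from a missing parent into
an actual vertex: a common root, which is the only sink. -/
def withRoot (p : α → Option α) (o : Option α) : Option α :=
  o.bind p

theorem leads_withRoot_some_iff {w v : α} :
    Leads (withRoot p) (some w) (some v) ↔
      ReflTransGen (fun x y => p x = some y) w v := by
  refine ⟨fun h => ?_, fun h => h.lift some fun _ _ => id⟩
  generalize ha : some w = a at h
  induction h using ReflTransGen.head_induction_on generalizing w with
  | refl => exact Option.some_injective _ ha ▸ .refl
  | @head _ b hab hbv ih =>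
    subst ha
    cases b with
    | none =>
      have hfix : IsFixedPt (withRoot p) none := rfl
      exact absurd (Leads.eq_of_isFixedPt_left hbv hfix) (Option.some_ne_none v)
    | some c => exact .head hab (ih rfl)

theorem wellFounded_parent_iff_leads_none :
    (WellFounded fun a b => p b = some a) ↔ ∀ v, Leads (withRoot p) (some v) none := by
  constructor
  · intro hwf v
    induction v using hwf.induction with
    | _ v ih =>
      cases hv : p v with
      | none => exact .single hv
      | some u => exact (ih u hv).head hv
  · refine fun h => ⟨fun v => ?_⟩
    have hv := h v
    generalize ha : some v = a at hv
    induction hv using ReflTransGen.head_induction_on generalizing v with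
    | refl => exact absurd ha (Option.some_ne_none v)
    | head hab _ ih =>
      subst ha
      exact ⟨v, fun u hu => ih u (hu.symm.trans hab)⟩

variable [Fintype α] [DecidableEq α]

theorem isForestOn_withRoot_iff :
    IsForestOn ({none}ᶜ : Finset (Option α)) (withRoot p) ↔
      WellFounded fun a b => p b = some a := by
  rw [wellFounded_parent_iff_leads_none]
  constructor
  · intro h v
    obtain ⟨s, hs, hvs⟩ := h.exists_leads (some v)
    rwa [mem_singleton.1 (notMem_compl.1 hs)] at hvs
  · intro h
    refine ⟨fun v hv => ?_, fun v => ⟨none, by simp, ?_⟩⟩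
    · rw [mem_singleton.1 (notMem_compl.1 hv)]
      rfl
    · cases v with
      | none => exact .refl
      | some v => exact h v

-- The label `a` that `getD` gives to `none` is irrelevant: the root descends from no other vertex.
theorem ncard_proper_eq_card_properVertices [LinearOrder α] (a : α) :
    Set.ncard {v | ∀ w, ReflTransGen (fun x y => p x = some y) w v → v ≤ w} =
      #(properVertices (·.getD a) ({none}ᶜ : Finset (Option α)) (withRoot p)) := by
  rw [← Set.ncard_image_of_injective _ (Option.some_injective α), ← Set.ncard_coe_finset]
  congr 1
  ext o
  rw [mem_coe, mem_properVertices, mem_compl, mem_singleton]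
  cases o with
  | none => simp
  | some v =>
    rw [(Option.some_injective α).mem_set_image]
    refine ⟨fun hv => ⟨Option.some_ne_none v, ?_⟩,
      fun hv w hw => hv.2 _ (leads_withRoot_some_iff.2 hw)⟩
    rintro (_ | w) hw
    · exact absurd (hw.eq_of_isFixedPt_left rfl) (Option.some_ne_none v)
    · exact hv w (leads_withRoot_some_iff.1 hw)

theorem injOn_getD (a : α) :
    Set.InjOn (fun o : Option α => o.getD a) ({none}ᶜ : Finset (Option α)) := by
  rintro (_ | v) hv (_ | w) hw hvw
  all_goals simp_all

theorem finsum_forest_eq_sum_forestsOn {R : Type*} [LinearOrder α] [CommSemiring R] (t : R)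
    (a : α) :
    ∑ᶠ p : {p : α → Option α // WellFounded fun a b => p b = some a},
        t ^ Set.ncard {v | ∀ w, ReflTransGen (fun x y => p.1 x = some y) w v → v ≤ w} =
      ∑ q ∈ forestsOn ({none}ᶜ : Finset (Option α)),
        t ^ #(properVertices (·.getD a) ({none}ᶜ : Finset (Option α)) q) := by
  classical
  have hnone {q : Option α → Option α} (hq : q ∈ forestsOn {none}ᶜ) :
      withRoot (q ∘ some) = q := by
    funext o
    cases o with
    | none => exact ((mem_forestsOn.1 hq).isFixedPt none (by simp)).symm
    | some v => rfl
  rw [finsum_eq_sum_of_fintype]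
  refine sum_bij' (fun p _ => withRoot p.1)
    (fun q hq => ⟨q ∘ some, isForestOn_withRoot_iff.1 ((hnone hq).symm ▸ mem_forestsOn.1 hq)⟩)
    ?_ ?_ ?_ ?_ ?_
  · exact fun p _ => mem_forestsOn.2 (isForestOn_withRoot_iff.2 p.2)
  · exact fun _ _ => mem_univ _
  · exact fun _ _ => rfl
  · exact fun q hq => hnone hq
  · exact fun p _ => by rw [ncard_proper_eq_card_properVertices a]

end PartialParent

theorem forest_poly_general {α R : Type*} [LinearOrder α] [Finite α] [Nonempty α] [CommSemiring R]
    (t : R) :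
    ∑ᶠ p : {p : α → Option α // WellFounded fun a b => p b = some a},
        t ^ Set.ncard {v | ∀ w, ReflTransGen (fun x y => p.1 x = some y) w v → v ≤ w} =
      t * ∏ i ∈ Icc 1 (Nat.card α - 1), (((i : R) + 1) * t + ((Nat.card α - i : ℕ) : R)) := by
  have := Fintype.ofFinite α
  obtain ⟨a⟩ := ‹Nonempty α›
  obtain ⟨k, hk⟩ : ∃ k, Nat.card α = k + 1 := Nat.exists_eq_add_one.2 Nat.card_pos
  have hvertices : #({none}ᶜ : Finset (Option α)) = k + 1 := by
    rw [card_compl, card_singleton, Fintype.card_option, Nat.add_sub_cancel,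
      ← Nat.card_eq_fintype_card, hk]
  rw [finsum_forest_eq_sum_forestsOn t a, sum_forestsOn t k hvertices (injOn_getD a), hk,
    Nat.add_sub_cancel, compl_compl, card_singleton, Nat.cast_one, one_mul,
    ← Ico_add_one_right_eq_Icc, prod_Ico_eq_prod_range, Nat.add_sub_cancel]
  congr! 2 with i
  rw [Nat.add_comm 1 i, Nat.add_sub_add_right]
  push_cast
  ring

instance (n : ℕ) : LinearOrder (Vn n) :=
  inferInstanceAs (LinearOrder {v : ℕ // v ∈ Icc 1 n})

instance (n : ℕ) : Finite (Vn n) :=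
  inferInstanceAs (Finite {v : ℕ // v ∈ Icc 1 n})

theorem card_Vn (n : ℕ) : Nat.card (Vn n) = n :=
  (Nat.card_eq_card_toFinset _).trans (by simp)

/-- For `n ≥ 1`, the polynomial `f_n(t) = Σ_{F ∈ ℱ_n} t^{pv(F)}` is given by
`f_n(t) = t · Π_{i=1}^{n−1} ((i+1)·t + (n − i))`. -/
theorem forest_poly (n : ℕ) (hn : 1 ≤ n) (t : ℚ) :
    (∑ᶠ F : Fo n, t ^ pvF F.1) =
      t * ∏ i ∈ Finset.Icc 1 (n - 1), (((i : ℚ) + 1) * t + ((n - i : ℕ) : ℚ)) := by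
  have : Nonempty (Vn n) := ⟨1, mem_Icc.2 ⟨le_rfl, hn⟩⟩
  have h := forest_poly_general (α := Vn n) t
  rw [card_Vn] at h
  exact h
end

section
/- For every n ≥ 1, Σ_{T ∈ 𝒯_{n+1}} t^{pv(T)} = t · Π_{i=0}^{n−1} ((i+1)·t + (n − i)) as polynomials in t, where 𝒯_{n+1} is the set of rooted trees on [n+1]; in particular, setting t = 1 gives |𝒯_{n+1}| = (n+1)^n. -/
/-- `𝒯_m`: the rooted trees on `[m]`, i.e. forests with exactly one root
(equivalently, connected forests). -/
def Tr (m : ℕ) : Type :=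
  {p : Vn m → Option (Vn m) // IsForest p ∧ ∃! v : Vn m, p v = none}

/-!
Let `L` be a set of roots with nonempty complement and let `m` be the smallest vertex outside `L`.
In a forest with root set `L`, the path from `m` ends with an edge from some `x ∉ L` to a root
`y ∈ L`. Cutting this edge gives a forest with root set `L ∪ {x}` in which `m` still descends from
`x`, and no vertex outside `L` gains or loses descendants. Hence the generating function of the
forests in which `m` lies below `y` is the same for every `y ∈ L`. Moreover `x` is proper iff
`x = m`: the case `x = m` contributes `t` times the generating function of all forests with root set
`L ∪ {m}`, hence `|L| + 1` equal summands, and each of the `N - 1 - |L|` vertices `x ≠ m`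
contributes one more such summand, where `N` is the number of vertices. So every root added to `L`
gives a factor `(|L| + 1) t + (N - 1 - |L|)`. Rooted trees are covered by starting from `L = ∅`, as
if the root had been cut off an additional vertex.
-/

theorem isLeast_compl_insert {α : Type*} [Preorder α] {s : Set α} {a b : α} (ha : IsLeast sᶜ a)
    (hba : b ≠ a) : IsLeast (insert b s)ᶜ a := by
  refine ⟨?_, fun c hc => ha.2 fun hcs => hc (Set.mem_insert_of_mem b hcs)⟩
  rw [Set.mem_compl_iff, Set.mem_insert_iff, not_or]
  exact ⟨hba.symm, ha.1⟩

theorem sum_eq_sum_sum_filter_of_existsUnique {α β M : Type*} [AddCommMonoid M] {s : Finset α}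
    {t : Finset β} {r : α → β → Prop} [∀ b, DecidablePred (r · b)]
    (h : ∀ a ∈ s, ∃! b, b ∈ t ∧ r a b) (f : α → M) :
    ∑ a ∈ s, f a = ∑ b ∈ t, ∑ a ∈ s with r a b, f a := by
  simp_rw [Finset.sum_filter]
  rw [Finset.sum_comm]
  refine Finset.sum_congr rfl fun a ha => ?_
  obtain ⟨b, ⟨hb, hab⟩, hunique⟩ := h a ha
  have hne : ∀ c ∈ t, c ≠ b → (if r a c then f a else 0) = 0 := fun c hc hcb =>
    if_neg fun hac => hcb (hunique c ⟨hc, hac⟩)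
  rw [Finset.sum_eq_single_of_mem b hb hne, if_pos hab]

/-- A parent map on `V`: `p v` is the parent of `v`, and `none` marks the roots. It is the analogue
on an arbitrary vertex type of the functions that encode forests on `[n]`. -/
abbrev ParentMap (V : Type*) := V → Option V

namespace ParentMap

open Finset Function

section Descends

variable {V : Type*} {p q : ParentMap V} {a b v w x y : V}

/-- Following parents always terminates, that is, `p` encodes a rooted forest. -/
def IsAcyclic (p : ParentMap V) : Prop := WellFounded fun a b => p b = some a

/-- `w` is a descendant of `v`: iterating `p` from `w`, zero or more times, reaches `v`. -/
def Descends (p : ParentMap V) (w v : V) : Prop :=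
  Relation.ReflTransGen (fun a b => p a = some b) w v

theorem Descends.refl (p : ParentMap V) (v : V) : Descends p v v := Relation.ReflTransGen.refl

theorem Descends.total (ha : Descends p w a) (hb : Descends p w b) :
    Descends p a b ∨ Descends p b a :=
  Relation.ReflTransGen.total_of_right_unique
    (fun _ _ _ h h' => Option.some.inj (h.symm.trans h')) ha hb

theorem Descends.eq_of_root (h : Descends p w v) (hw : p w = none) : w = v := by
  rcases Relation.ReflTransGen.cases_head h with h | ⟨_, hparent, _⟩
  · exact h
  · simp [hw] at hparent

theorem Descends.eq_of_child_of_root (h : Descends p a b) (hy : p y = none) (ha : p a = some y)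
    (hb : p b = some y) : a = b := by
  rcases Relation.ReflTransGen.cases_head h with h | ⟨c, hc, hcb⟩
  · exact h
  · obtain rfl : y = c := Option.some.inj (ha.symm.trans hc)
    obtain rfl : y = b := Descends.eq_of_root hcb hy
    simp [hy] at hb

theorem IsAcyclic.exists_root (hp : IsAcyclic p) (w : V) : ∃ y, p y = none ∧ Descends p w y := by
  induction w using hp.induction with
  | _ w ih =>
    cases hw : p w with
    | none => exact ⟨w, hw, .refl p w⟩
    | some a =>
      obtain ⟨y, hy, hay⟩ := ih a hw
      exact ⟨y, hy, Relation.ReflTransGen.head hw hay⟩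

theorem IsAcyclic.existsUnique_root (hp : IsAcyclic p) (w : V) :
    ∃! y, p y = none ∧ Descends p w y := by
  refine existsUnique_of_exists_of_unique (hp.exists_root w) ?_
  rintro y y' ⟨hy, hwy⟩ ⟨hy', hwy'⟩
  rcases hwy.total hwy' with h | h
  · exact h.eq_of_root hy
  · exact (h.eq_of_root hy').symm

theorem Descends.existsUnique_child_of_root (h : Descends p w y) (hy : p y = none) (hwy : w ≠ y) :
    ∃! x, p x = some y ∧ Descends p w x := by
  refine existsUnique_of_exists_of_unique ?_ ?_
  · rcases Relation.ReflTransGen.cases_tail h with h | ⟨x, hwx, hxy⟩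
    · exact absurd h.symm hwy
    · exact ⟨x, hxy, hwx⟩
  · rintro x x' ⟨hx, hwx⟩ ⟨hx', hwx'⟩
    rcases hwx.total hwx' with h | h
    · exact h.eq_of_child_of_root hy hx hx'
    · exact (h.eq_of_child_of_root hy hx' hx).symm

variable [DecidableEq V]

theorem descends_update_iff (hx : q x = none) (hy : q y = none) (hv : v ≠ y) :
    Descends (update q x (some y)) w v ↔ Descends q w v := by
  constructor <;> intro h
  · induction h using Relation.ReflTransGen.head_induction_on with
    | refl => exact .refl q v
    | @head a b hab hbv ih =>
      rcases eq_or_ne a x with rfl | hax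
      · obtain rfl : y = b := by simpa using hab
        exact absurd (ih.eq_of_root hy).symm hv
      · exact Relation.ReflTransGen.head (by simpa [hax] using hab) ih
  · refine Relation.ReflTransGen.mono (fun a b hab => ?_) _ _ h
    have hax : a ≠ x := by rintro rfl; simp [hx] at hab
    simpa [hax] using hab

theorem isAcyclic_update_iff (hx : q x = none) (hy : q y = none) (hxy : x ≠ y) :
    IsAcyclic (update q x (some y)) ↔ IsAcyclic q := by
  constructor <;> intro h
  · refine Subrelation.wf (fun {a b} hab => ?_) h
    have hbx : b ≠ x := by rintro rfl; simp [hx] at hab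
    simpa [hbx] using hab
  · have acc_y : Acc (fun a b => update q x (some y) b = some a) y :=
      ⟨_, fun b hb => by simp [hxy.symm, hy] at hb⟩
    refine ⟨fun v => ?_⟩
    induction v using h.induction with
    | _ v ih =>
      refine ⟨_, fun a ha => ?_⟩
      rcases eq_or_ne v x with rfl | hvx
      · obtain rfl : y = a := by simpa using ha
        exact acc_y
      · exact ih a (by simpa [hvx] using ha)

end Descends

/-- `p` encodes a rooted tree, that is, a forest with exactly one root. -/
def IsTree {V : Type*} (p : ParentMap V) : Prop := IsAcyclic p ∧ ∃! v, p v = none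

/-- The rooted trees on the vertex type `V`, generalizing `Tr`. -/
def RootedTree (V : Type*) : Type _ := {p : ParentMap V // IsTree p}

section Proper

variable {V : Type*} {p : ParentMap V} {m x : V}

/-- `v` is the smallest of its descendants. -/
def IsProper [LE V] (p : ParentMap V) (v : V) : Prop := ∀ w, Descends p w v → v ≤ w

theorem isProper_iff_eq [PartialOrder V] (hmx : Descends p m x)
    (hmin : ∀ w, Descends p w x → m ≤ w) : IsProper p x ↔ x = m :=
  ⟨fun h => le_antisymm (h m hmx) (hmin x (.refl p x)), fun h => h ▸ hmin⟩

open Classical in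
/-- The number of proper vertices of `p` in `S`. -/
noncomputable def numProper [LE V] (p : ParentMap V) (S : Finset V) : ℕ :=
  #{v ∈ S | IsProper p v}

theorem numProper_insert [LE V] [DecidableEq V] [Decidable (IsProper p x)] {S : Finset V}
    (hx : x ∉ S) :
    numProper p (insert x S) = numProper p S + if IsProper p x then 1 else 0 := by
  unfold numProper
  split_ifs with h <;> simp [filter_insert, h, hx]

theorem numProper_univ [LE V] [Fintype V] (p : ParentMap V) :
    numProper p univ = {v | IsProper p v}.ncard := by
  classical
  rw [Set.ncard_eq_toFinset_card', Set.toFinset_ofFinset]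
  simp [numProper]

end Proper

section Forests

variable {V : Type*} [DecidableEq V] [Fintype V] {L : Finset V} {p q : ParentMap V} {m v w x y : V}

open Classical in
/-- The forests on `V` whose set of roots is exactly `L`. -/
noncomputable def forests (L : Finset V) : Finset (ParentMap V) :=
  {p | IsAcyclic p ∧ ∀ v, p v = none ↔ v ∈ L}

theorem mem_forests : p ∈ forests L ↔ IsAcyclic p ∧ ∀ v, p v = none ↔ v ∈ L := by
  simp [forests]

theorem eq_none_iff_of_mem_forests (hp : p ∈ forests L) : p v = none ↔ v ∈ L :=
  (mem_forests.1 hp).2 v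

theorem existsUnique_root_of_mem_forests (hp : p ∈ forests L) (w : V) :
    ∃! y, y ∈ L ∧ Descends p w y := by
  simpa only [eq_none_iff_of_mem_forests hp] using (mem_forests.1 hp).1.existsUnique_root w

theorem existsUnique_child_of_mem_forests (hp : p ∈ forests L) (hw : w ∉ L) (hy : y ∈ L)
    (h : Descends p w y) : ∃! x, x ∈ Lᶜ ∧ p x = some y ∧ Descends p w x := by
  have hchild : ∀ x, p x = some y → x ∈ Lᶜ := fun x hx => by
    simp [← eq_none_iff_of_mem_forests hp, hx]
  refine (existsUnique_congr fun x => ?_).1 (h.existsUnique_child_of_root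
    ((eq_none_iff_of_mem_forests hp).2 hy) (ne_of_mem_of_not_mem hy hw).symm)
  exact ⟨fun hx => ⟨hchild x hx.1, hx⟩, And.right⟩

theorem mem_forests_singleton : p ∈ forests {x} ↔ IsTree p ∧ p x = none := by
  simp only [mem_forests, mem_singleton, IsTree, and_assoc]
  refine and_congr_right fun _ => ⟨fun h => ⟨⟨x, (h x).2 rfl, fun v => (h v).1⟩, (h x).2 rfl⟩, ?_⟩
  rintro ⟨hunique, hx⟩ v
  exact ⟨fun hv => hunique.unique hv hx, fun h => h ▸ hx⟩

theorem descends_of_mem_forests_singleton (hp : p ∈ forests {x}) (w : V) : Descends p w x := by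
  obtain ⟨y, ⟨hy, hwy⟩, -⟩ := existsUnique_root_of_mem_forests hp w
  rwa [mem_singleton.1 hy] at hwy

theorem forests_univ : forests (univ : Finset V) = {fun _ => none} := by
  ext p
  rw [mem_forests, mem_singleton]
  constructor
  · rintro ⟨-, h⟩
    exact funext fun v => (h v).2 (mem_univ v)
  · rintro rfl
    exact ⟨⟨fun _ => ⟨_, fun _ h => by cases h⟩⟩, by simp⟩

theorem update_mem_forests_iff (hx : x ∉ L) (hy : y ∈ L) (hqx : q x = none) (hqy : q y = none) :
    update q x (some y) ∈ forests L ↔ q ∈ forests (insert x L) := by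
  have hxy : x ≠ y := (ne_of_mem_of_not_mem hy hx).symm
  rw [mem_forests, mem_forests, isAcyclic_update_iff hqx hqy hxy]
  refine and_congr_right fun _ => forall_congr' fun v => ?_
  rcases eq_or_ne v x with rfl | hvx
  · simp [hx, hqx]
  · simp [hvx]

theorem numProper_update [LE V] (hqx : q x = none) (hqy : q y = none) (hy : y ∈ L) :
    numProper (update q x (some y)) Lᶜ = numProper q Lᶜ := by
  classical
  refine congrArg card (filter_congr fun v hv => forall_congr' fun w => ?_)
  rw [descends_update_iff hqx hqy (ne_of_mem_of_not_mem hy (mem_compl.1 hv)).symm]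

theorem numProper_compl [PartialOrder V] (hm : m ∈ lowerBounds (Lᶜ : Set V)) (hx : x ∉ L)
    (hq : q ∈ forests (insert x L)) (hmx : Descends q m x) :
    numProper q Lᶜ = numProper q (insert x L)ᶜ + if x = m then 1 else 0 := by
  have hdesc : ∀ w, Descends q w x → m ≤ w := fun w hwx => hm fun hw => hx <| by
    rwa [hwx.eq_of_root ((eq_none_iff_of_mem_forests hq).2 (mem_insert_of_mem hw))] at hw
  classical
  simp_rw [← isProper_iff_eq hmx hdesc]
  rw [← numProper_insert (by simp), compl_insert, insert_erase (mem_compl.2 hx)]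

open Classical in
theorem finsum_rootedTree_eq_sum {M : Type*} [AddCommMonoid M] (f : ParentMap V → M) :
    ∑ᶠ T : RootedTree V, f T.1 = ∑ p : ParentMap V with IsTree p, f p :=
  (finsum_subtype_eq_finsum_cond _).trans (finsum_cond_eq_sum_of_cond_iff f (by simp))

end Forests

section Sums

variable {V R : Type*} [LE V] [DecidableEq V] [Fintype V] [CommSemiring R] {L : Finset V}
  {m x y : V}

/-- The generating function of the forests with root set `L` by proper non-root vertices. -/
noncomputable def forestSum (t : R) (L : Finset V) : R :=
  ∑ p ∈ forests L, t ^ numProper p Lᶜ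

open Classical in
/-- The part of `forestSum t L` coming from the forests in which `y` is the root above `m`. -/
noncomputable def pathSum (t : R) (L : Finset V) (m y : V) : R :=
  ∑ p ∈ forests L with Descends p m y, t ^ numProper p Lᶜ

open Classical in
/-- The generating function, by proper vertices outside `L`, of the forests that have a single root
`x` outside `L`, this root being the one above `m`. Grafting `x` onto a vertex of `L` turns them
into forests with root set `L`; for `L = ∅` they are the rooted trees on `V`. -/
noncomputable def attachSum (t : R) (L : Finset V) (m : V) : R :=
  ∑ x ∈ Lᶜ, ∑ q ∈ forests (insert x L) with Descends q m x, t ^ numProper q Lᶜ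

theorem forestSum_univ (t : R) : forestSum t (univ : Finset V) = 1 := by
  simp [forestSum, forests_univ, numProper]

theorem forestSum_eq_sum_pathSum (t : R) (L : Finset V) (m : V) :
    forestSum t L = ∑ y ∈ L, pathSum t L m y := by
  classical
  exact sum_eq_sum_sum_filter_of_existsUnique (fun _ hp => existsUnique_root_of_mem_forests hp m) _

theorem pathSum_self (t : R) (L : Finset V) : pathSum t L m m = forestSum t L := by
  simp [pathSum, forestSum, Descends.refl]

open Classical in
theorem sum_forests_insert_eq_sum_graft (t : R) (hx : x ∉ L) (hy : y ∈ L) :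
    ∑ q ∈ forests (insert x L) with Descends q m x, t ^ numProper q Lᶜ =
      ∑ p ∈ forests L with p x = some y ∧ Descends p m x, t ^ numProper p Lᶜ := by
  have hxy : x ≠ y := (ne_of_mem_of_not_mem hy hx).symm
  have hroots : ∀ q ∈ forests (insert x L), q x = none ∧ q y = none := fun q hq => by
    simp [eq_none_iff_of_mem_forests hq, hy]
  refine sum_nbij (fun q => update q x (some y)) ?maps ?inj ?surj ?weight
  case maps =>
    intro q hq
    rw [mem_filter] at hq ⊢
    obtain ⟨hqx, hqy⟩ := hroots q hq.1
    rwa [update_mem_forests_iff hx hy hqx hqy, descends_update_iff hqx hqy hxy, update_self,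
      eq_self, true_and]
  case inj =>
    intro q hq q' hq' h
    have hqx := (hroots q (mem_filter.1 hq).1).1
    have hqx' := (hroots q' (mem_filter.1 hq').1).1
    calc
      q = update (update q x (some y)) x none := by simp [← hqx]
      _ = update (update q' x (some y)) x none := congrArg (update · x none) h
      _ = q' := by simp [← hqx']
  case surj =>
    intro p hp
    obtain ⟨hpL, hpx, hmx⟩ := mem_filter.1 hp
    obtain ⟨q, hqx, rfl⟩ : ∃ q : ParentMap V, q x = none ∧ update q x (some y) = p :=
      ⟨update p x none, by simp, by simp [← hpx]⟩
    have hqy : q y = none := by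
      simpa [hxy.symm, hy] using eq_none_iff_of_mem_forests (v := y) hpL
    rw [update_mem_forests_iff hx hy hqx hqy] at hpL
    rw [descends_update_iff hqx hqy hxy] at hmx
    exact ⟨q, mem_filter.2 ⟨hpL, hmx⟩, rfl⟩
  case weight =>
    intro q hq
    obtain ⟨hqx, hqy⟩ := hroots q (mem_filter.1 hq).1
    rw [numProper_update hqx hqy hy]

theorem pathSum_eq_attachSum (t : R) (hm : m ∉ L) (hy : y ∈ L) :
    pathSum t L m y = attachSum t L m := by
  classical
  rw [pathSum, sum_eq_sum_sum_filter_of_existsUnique fun p hp =>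
    existsUnique_child_of_mem_forests (mem_filter.1 hp).1 hm hy (mem_filter.1 hp).2]
  refine sum_congr rfl fun x hx => ?_
  rw [sum_forests_insert_eq_sum_graft t (mem_compl.1 hx) hy]
  refine sum_congr (Finset.ext fun p => ?_) fun _ _ => rfl
  have hmy : p x = some y ∧ Descends p m x → Descends p m y :=
    fun ⟨hpx, hmx⟩ => Relation.ReflTransGen.tail hmx hpx
  simp only [mem_filter, and_assoc, and_iff_right_of_imp hmy]

theorem forestSum_eq_card_mul_attachSum (t : R) (hm : m ∉ L) :
    forestSum t L = #L * attachSum t L m := by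
  rw [forestSum_eq_sum_pathSum t L m, sum_congr rfl fun y hy => pathSum_eq_attachSum t hm hy,
    sum_const, nsmul_eq_mul]

open Classical in
theorem sum_isTree_eq_attachSum (t : R) (m : V) :
    ∑ p : ParentMap V with IsTree p, t ^ {v | IsProper p v}.ncard = attachSum t ∅ m := by
  rw [sum_eq_sum_sum_filter_of_existsUnique (t := univ) (r := fun p x => p x = none)
    fun p hp => by simpa using (mem_filter.1 hp).2.2, attachSum, compl_empty]
  refine sum_congr rfl fun x _ => sum_congr (Finset.ext fun p => ?_) fun p _ => ?_
  · rw [insert_empty_eq, filter_true_of_mem fun p hp => descends_of_mem_forests_singleton hp m,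
      mem_forests_singleton]
    simp
  · rw [numProper_univ]

end Sums

section Recursion

variable {V R : Type*} [Fintype V] [CommSemiring R] {L : Finset V} {m x : V}

open Classical in
theorem sum_forests_insert_eq_mul_pathSum [PartialOrder V] [DecidableEq V] (t : R)
    (hm : m ∈ lowerBounds (Lᶜ : Set V)) (hx : x ∉ L) :
    ∑ q ∈ forests (insert x L) with Descends q m x, t ^ numProper q Lᶜ =
      (if x = m then t else 1) * pathSum t (insert x L) m x := by
  rw [pathSum, mul_sum]
  refine sum_congr rfl fun q hq => ?_
  rw [mem_filter] at hq
  rw [numProper_compl hm hx hq.1 hq.2, pow_add, mul_comm]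
  split_ifs <;> simp

theorem attachSum_eq_add_sum [PartialOrder V] [DecidableEq V] (t : R)
    (hm : IsLeast (Lᶜ : Set V) m) :
    attachSum t L m =
      t * forestSum t (insert m L) + ∑ x ∈ Lᶜ.erase m, attachSum t (insert x L) m := by
  have hmL : m ∉ L := hm.1
  rw [attachSum, sum_congr rfl fun x hx =>
    sum_forests_insert_eq_mul_pathSum t hm.2 (mem_compl.1 hx),
    ← add_sum_erase _ _ (mem_compl.2 hmL), if_pos rfl, pathSum_self]
  refine congrArg _ (sum_congr rfl fun x hx => ?_)
  have hxm : x ≠ m := ne_of_mem_erase hx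
  rw [if_neg hxm, one_mul, pathSum_eq_attachSum t (by simp [hmL, hxm.symm]) (by simp)]

theorem attachSum_eq_prod [LinearOrder V] (t : R) (hm : IsLeast (Lᶜ : Set V) m) :
    attachSum t L m = t * ∏ i ∈ Ico #L (Fintype.card V - 1),
      (((i : R) + 1) * t + ((Fintype.card V - 1 - i : ℕ) : R)) := by
  induction L using WellFoundedGT.induction generalizing m with
  | _ L ih =>
    have hmL : m ∉ L := hm.1
    have hcard : #(Lᶜ.erase m) = Fintype.card V - 1 - #L := by
      rw [card_erase_of_mem (mem_compl.2 hmL), card_compl, Nat.sub_right_comm]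
    rw [attachSum_eq_add_sum t hm]
    rcases (Lᶜ.erase m).eq_empty_or_nonempty with hempty | hne
    · have huniv : insert m L = univ := by rwa [← compl_eq_empty_iff, compl_insert]
      rw [hempty, card_empty] at hcard
      rw [huniv, hempty, forestSum_univ, Ico_eq_empty_of_le (Nat.sub_eq_zero_iff_le.1 hcard.symm)]
      simp
    · have hlt : #L < Fintype.card V - 1 := by
        rw [← Nat.sub_pos_iff_lt, ← hcard]
        exact hne.card_pos
      set Q := t * ∏ i ∈ Ico (#L + 1) (Fintype.card V - 1),
        (((i : R) + 1) * t + ((Fintype.card V - 1 - i : ℕ) : R)) with hQ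
      have hforest : forestSum t (insert m L) = (#L + 1) * Q := by
        obtain ⟨m', hm'⟩ : ∃ m', IsLeast ((insert m L : Finset V)ᶜ : Set V) m' := by
          rw [← coe_compl, compl_insert]
          exact ⟨_, isLeast_min' _ hne⟩
        rw [forestSum_eq_card_mul_attachSum t hm'.1, ih _ (ssubset_insert hmL) hm',
          card_insert_of_notMem hmL, Nat.cast_succ]
      have hattach : ∀ x ∈ Lᶜ.erase m, attachSum t (insert x L) m = Q := fun x hx => by
        obtain ⟨hxm, hxL⟩ := mem_erase.1 hx
        rw [mem_compl] at hxL
        have hm' := isLeast_compl_insert hm hxm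
        rw [← coe_insert] at hm'
        rw [ih _ (ssubset_insert hxL) hm', card_insert_of_notMem hxL]
      rw [hforest, sum_congr rfl hattach, sum_const, hcard, nsmul_eq_mul,
        prod_eq_prod_Ico_succ_bot hlt, hQ]
      ring

end Recursion

end ParentMap

open ParentMap Finset in
theorem tree_poly_general {V R : Type*} [LinearOrder V] [Fintype V] [Nonempty V] [CommSemiring R]
    (t : R) :
    ∑ᶠ T : RootedTree V, t ^ {v | IsProper T.1 v}.ncard =
      t * ∏ i ∈ range (Fintype.card V - 1),
        (((i : R) + 1) * t + ((Fintype.card V - 1 - i : ℕ) : R)) := by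
  obtain ⟨m, hm⟩ : ∃ m : V, IsLeast ((∅ : Finset V)ᶜ : Set V) m := by
    rw [← coe_compl, compl_empty]
    exact ⟨_, isLeast_min' _ univ_nonempty⟩
  rw [finsum_rootedTree_eq_sum fun p => t ^ {v | IsProper p v}.ncard, sum_isTree_eq_attachSum t m,
    attachSum_eq_prod t hm, card_empty, range_eq_Ico]

open ParentMap Finset in
theorem card_rootedTree {V : Type*} [Fintype V] [Nonempty V] :
    Nat.card (RootedTree V) = Fintype.card V ^ (Fintype.card V - 1) := by
  let _ : LinearOrder V := LinearOrder.lift' _ (Fintype.equivFin V).injective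
  have hfactor : ∀ i ∈ range (Fintype.card V - 1),
      (i + 1) * 1 + (Fintype.card V - 1 - i) = Fintype.card V := fun i hi => by
    rw [mem_range] at hi
    lia
  have hsum := tree_poly_general (V := V) (1 : ℕ)
  simp only [one_pow, one_mul, Nat.cast_id, prod_congr rfl hfactor, prod_const, card_range] at hsum
  rw [← Set.ncard_univ, ← finsum_one, finsum_mem_univ, hsum]

noncomputable instance Vn.instLinearOrder (n : ℕ) : LinearOrder (Vn n) :=
  inferInstanceAs (LinearOrder {v : ℕ // v ∈ Finset.Icc 1 n})

instance Vn.instFintype (n : ℕ) : Fintype (Vn n) :=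
  inferInstanceAs (Fintype {v : ℕ // v ∈ Finset.Icc 1 n})

theorem Vn.card_eq (n : ℕ) : Fintype.card (Vn n) = n :=
  (Fintype.card_coe (Finset.Icc 1 n)).trans (Nat.card_Icc 1 n)

instance Vn.instNonempty (n : ℕ) : Nonempty (Vn (n + 1)) :=
  ⟨⟨1, by simp⟩⟩

/-- For `n ≥ 1`, `Σ_{T ∈ 𝒯_{n+1}} t^{pv(T)} = t · Π_{i=0}^{n−1} ((i+1)·t + (n − i))`;
in particular, at `t = 1`, `|𝒯_{n+1}| = (n+1)^n`. -/
theorem tree_poly (n : ℕ) (hn : 1 ≤ n) :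
    (∀ t : ℚ, (∑ᶠ T : Tr (n + 1), t ^ pvF T.1) =
        t * ∏ i ∈ Finset.range n, (((i : ℚ) + 1) * t + ((n - i : ℕ) : ℚ))) ∧
      Nat.card (Tr (n + 1)) = (n + 1) ^ n := by
  have hcard : Fintype.card (Vn (n + 1)) = n + 1 := Vn.card_eq (n + 1)
  exact ⟨fun t => (tree_poly_general (V := Vn (n + 1)) t).trans (by rw [hcard, Nat.add_sub_cancel]),
    (card_rootedTree (V := Vn (n + 1))).trans (by rw [hcard, Nat.add_sub_cancel])⟩
end

section
/- For every n ≥ 1, Σ_{P ∈ 𝒫_{n+1}} t^{pv(P)} = t · Π_{i=0}^{n−1} ((2i+1)·t + (n − i)) as polynomials in t, where 𝒫_{n+1} is the set of plane trees on [n+1]; in particular, setting t = 1 gives |𝒫_{n+1}| = (n+1)!·C_n, where C_n = (1/(n+1))·binom(2n,n) is the n-th Catalan number. -/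
/-- Labeled plane trees: a root label together with a linearly ordered list of subtrees. -/
inductive PT : Type
  | node (label : ℕ) (children : List PT) : PT

/-- The multiset of labels of a plane tree. -/
def PT.labels : PT → Multiset ℕ
  | .node a ch => a ::ₘ (ch.attach.map fun c => PT.labels c.1).sum
decreasing_by
  have := List.sizeOf_lt_of_mem c.2
  simp only [PT.node.sizeOf_spec]
  omega

/-- The number of *proper* vertices of a plane tree: a vertex is proper if its label is
the smallest label in its descendant subtree (including itself). -/
def PT.pv : PT → ℕ
  | .node a ch =>
      (if ∀ b ∈ (ch.map PT.labels).sum, a ≤ b then 1 else 0)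
        + (ch.attach.map fun c => PT.pv c.1).sum
decreasing_by
  have := List.sizeOf_lt_of_mem c.2
  simp only [PT.node.sizeOf_spec]
  omega

/-- `𝒫ℱ_n`: plane forests on `[n]`, i.e. sequences of (nonempty) plane trees whose
label sets are disjoint with union `[n] = {1,…,n}`. -/
def PF (n : ℕ) : Type :=
  {l : List PT // (l.map PT.labels).sum = (Finset.Icc 1 n).val}

/-- The number of proper vertices of a plane forest. -/
def pvPF (l : List PT) : ℕ := (l.map PT.pv).sum

/-- `𝒫_{n+1}`: plane trees on `[n+1] = {1,…,n+1}`. -/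
def PTn (m : ℕ) : Type := {P : PT // P.labels = (Finset.Icc 1 m).val}

/-! A tree is a root followed by a forest, so it is natural to count, more generally, the pairs of a
tree containing the least label `m` and a `k`-tuple of forests. Let `T n k` be their enumerator when
there are `n + 1` labels in total, and let `B n k` be the enumerator of the `(k + 1)`-tuples of
forests on `n` labels that have the least label in the first forest.

If the root is `m`, it is proper, and removing it leaves an arbitrary `(k + 1)`-tuple of forests.
By symmetry their least label may be assumed to be in the first one, so for `n ≥ 1` this case
contributes `t * (k + 1) * B n k`. If the root is one of the `n` other labels, it is not proper, and
removing it leaves `k + 1` forests with `m` in the first one, so this case contributes `n * B n k`.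
Finally, splitting the first forest at the tree containing the least label yields that tree and one
forest on either side, so that `B n k = T (n - 1) (k + 2)`. Hence
`T n k = ((k + 1) * t + n) * T (n - 1) (k + 2)`, where `T 0 k = t`. -/

open Finset

section Multiset

variable {α β ι : Type*}

theorem multiset_cons_eq_val_iff [DecidableEq α] {a : α} {s : Multiset α} {S : Finset α} :
    a ::ₘ s = S.val ↔ a ∈ S ∧ s = (S.erase a).val := by
  rw [erase_val]
  constructor
  · intro h
    exact ⟨by simp [← mem_val, ← h], by simp [← h]⟩
  · rintro ⟨ha, rfl⟩
    exact Multiset.cons_erase ha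

theorem eq_of_mem_of_nodup_sum {I : Finset ι} {f : ι → Multiset α} {a : α} {i j : ι}
    (hf : (∑ i ∈ I, f i).Nodup) (hi : i ∈ I) (hj : j ∈ I) (hai : a ∈ f i) (haj : a ∈ f j) :
    i = j := by
  classical
  have hcount : ∑ i ∈ I, (f i).count a ≤ 1 := by
    rw [← Multiset.count_sum']
    exact Multiset.nodup_iff_count_le_one.1 hf a
  exact (sum_le_one_iff.1 hcount i j hi hj (Multiset.count_ne_zero.2 hai)
    (Multiset.count_ne_zero.2 haj)).1

theorem append_cons_inj_of_nodup_sum {f : α → Multiset β} {a a' : α} {b : β} {L L' R R' : List α}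
    (hf : ((L ++ a :: R).map f).sum.Nodup) (ha : b ∈ f a) (ha' : b ∈ f a') :
    L ++ a :: R = L' ++ a' :: R' ↔ L = L' ∧ a = a' ∧ R = R' := by
  simp only [List.map_append, List.map_cons, List.sum_append, List.sum_cons,
    Multiset.nodup_add, Multiset.disjoint_add_right, Multiset.disjoint_list_sum_left,
    Multiset.disjoint_list_sum_right, List.forall_mem_map] at hf
  obtain ⟨-, ⟨-, -, haR⟩, hLa, -⟩ := hf
  exact List.append_cons_inj_of_notMem
    (fun h => Multiset.disjoint_left.1 (hLa a' h) ha' ha)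
    (fun h => Multiset.disjoint_left.1 (haR a' h) ha ha')

end Multiset

section Enumerator

variable {α β ι R : Type*} [CommSemiring R]

/-- The set `s` is finite and `q` is the value at `t` of its enumerator `∑ x ∈ s, t ^ stat x` with
respect to the statistic `stat`. Finiteness is included since `finsum` is `0` on infinite
supports. -/
structure HasEnumerator (s : Set α) (stat : α → ℕ) (t q : R) : Prop where
  finite : s.Finite
  finsum_mem_eq : ∑ᶠ x ∈ s, t ^ stat x = q

namespace HasEnumerator

variable {s s' : Set α} {stat : α → ℕ} {t q q' : R}

theorem singleton (a : α) (stat : α → ℕ) (t : R) : HasEnumerator {a} stat t (t ^ stat a) :=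
  ⟨Set.finite_singleton a, finsum_mem_singleton⟩

theorem union (h : HasEnumerator s stat t q) (h' : HasEnumerator s' stat t q')
    (hd : Disjoint s s') : HasEnumerator (s ∪ s') stat t (q + q') where
  finite := h.finite.union h'.finite
  finsum_mem_eq := by
    rw [finsum_mem_union hd h.finite h'.finite, h.finsum_mem_eq, h'.finsum_mem_eq]

theorem of_bijOn {u : Set β} {stat' : β → ℕ} {f : α → β} (h : HasEnumerator s stat t q)
    (hf : Set.BijOn f s u) (hstat : ∀ x ∈ s, stat' (f x) = stat x) :
    HasEnumerator u stat' t q where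
  finite := hf.finite_iff_finite.1 h.finite
  finsum_mem_eq := by
    rw [← h.finsum_mem_eq]
    exact (finsum_mem_eq_of_bijOn f hf fun x hx => by rw [hstat x hx]).symm

theorem const_add (h : HasEnumerator s stat t q) (c : ℕ) :
    HasEnumerator s (fun x => c + stat x) t (t ^ c * q) where
  finite := h.finite
  finsum_mem_eq := by
    simp only [pow_add, ← h.finsum_mem_eq]
    exact ((AddMonoidHom.mulLeft (t ^ c)).map_finsum_mem _ h.finite).symm

theorem fiberwise {I : Finset ι} {s : ι → Set α} {stat : ι × α → ℕ} {q : ι → R}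
    (h : ∀ i ∈ I, HasEnumerator (s i) (fun a => stat (i, a)) t (q i)) :
    HasEnumerator {x : ι × α | x.1 ∈ I ∧ x.2 ∈ s x.1} stat t (∑ i ∈ I, q i) := by
  have hfiber : ∀ i ∈ I, HasEnumerator (Prod.mk i '' s i) stat t (q i) := fun i hi =>
    (h i hi).of_bijOn ((Prod.mk_right_injective i).injOn.bijOn_image) fun _ _ => rfl
  have hunion : {x : ι × α | x.1 ∈ I ∧ x.2 ∈ s x.1} = ⋃ i ∈ (I : Set ι), Prod.mk i '' s i := by
    ext ⟨i, a⟩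
    simp [and_comm]
  have hdisj : (I : Set ι).PairwiseDisjoint fun i => Prod.mk i '' s i := by
    intro i _ j _ hij
    rw [Function.onFun, Set.disjoint_left]
    rintro _ ⟨a, -, rfl⟩ ⟨b, -, hb⟩
    exact hij (Prod.ext_iff.1 hb).1.symm
  have hfin : ∀ i ∈ (I : Set ι), (Prod.mk i '' s i).Finite := fun i hi => (hfiber i hi).finite
  rw [hunion]
  refine ⟨I.finite_toSet.biUnion hfin, ?_⟩
  rw [finsum_mem_biUnion hdisj I.finite_toSet hfin, finsum_mem_coe_finset]
  exact sum_congr rfl fun i hi => (hfiber i hi).finsum_mem_eq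

theorem natCard_eq {q : ℕ} (h : HasEnumerator s stat 1 q) : Nat.card s = q := by
  rw [← h.finsum_mem_eq, Nat.card_coe_set_eq, ← finsum_one]
  simp only [one_pow]

end HasEnumerator

end Enumerator

section PlaneTree

/-- The multiset of labels of a plane forest. -/
def labelsPF (l : List PT) : Multiset ℕ := (l.map PT.labels).sum

theorem labelsPF_append_cons (L R : List PT) (P : PT) :
    labelsPF (L ++ P :: R) = labelsPF L + (P.labels + labelsPF R) := by
  simp [labelsPF]

theorem pvPF_append_cons (L R : List PT) (P : PT) :
    pvPF (L ++ P :: R) = pvPF L + (P.pv + pvPF R) := by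
  simp [pvPF]

namespace PT

/-- The label of the root of a plane tree. -/
def root : PT → ℕ
  | .node a _ => a

theorem labels_node (a : ℕ) (ch : List PT) : (node a ch).labels = a ::ₘ labelsPF ch := by
  rw [labels, labelsPF, List.attach_map_val]

theorem pv_node (a : ℕ) (ch : List PT) :
    (node a ch).pv = (if ∀ b ∈ labelsPF ch, a ≤ b then 1 else 0) + pvPF ch := by
  rw [pv, pvPF, labelsPF, List.attach_map_val]

theorem pv_node_of_forall_le {a : ℕ} {ch : List PT} (h : ∀ b ∈ labelsPF ch, a ≤ b) :
    (node a ch).pv = 1 + pvPF ch := by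
  rw [pv_node, if_pos h]

theorem pv_node_of_lt {a b : ℕ} {ch : List PT} (hb : b ∈ labelsPF ch) (hba : b < a) :
    (node a ch).pv = pvPF ch := by
  rw [pv_node, if_neg fun h => (h b hb).not_gt hba, zero_add]

end PT

theorem labelsPF_eq_zero_iff {l : List PT} : labelsPF l = 0 ↔ l = [] := by
  refine ⟨fun h => ?_, fun h => by simp [h, labelsPF]⟩
  match l with
  | [] => rfl
  | .node a ch :: l => simp [labelsPF, PT.labels_node] at h

theorem mem_labelsPF {l : List PT} {m : ℕ} : m ∈ labelsPF l ↔ ∃ P ∈ l, m ∈ P.labels := by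
  induction l with
  | nil => simp [labelsPF]
  | cons P l ih => simpa [labelsPF] using or_congr_right ih

end PlaneTree

section Tuples

variable {S : Finset ℕ} {m r k : ℕ}

/-- The `r`-tuples of plane forests whose combined label set is `S`. -/
def forestTuples (S : Finset ℕ) (r : ℕ) : Set (Fin r → List PT) :=
  {g | ∑ i, labelsPF (g i) = S.val}

/-- The `(r + 1)`-tuples of plane forests with combined label set `S` and `m` in the first
forest, which is kept apart from the others. -/
def markedForestTuples (m : ℕ) (S : Finset ℕ) (r : ℕ) : Set (List PT × (Fin r → List PT)) :=
  {x | m ∈ labelsPF x.1 ∧ labelsPF x.1 + ∑ i, labelsPF (x.2 i) = S.val}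

/-- The pairs of a plane tree containing the label `m` and a `k`-tuple of plane forests, with
combined label set `S`. -/
def markedTreeTuples (m : ℕ) (S : Finset ℕ) (k : ℕ) : Set (PT × (Fin k → List PT)) :=
  {x | m ∈ x.1.labels ∧ x.1.labels + ∑ i, labelsPF (x.2 i) = S.val}

theorem mem_forestTuples {g : Fin r → List PT} :
    g ∈ forestTuples S r ↔ ∑ i, labelsPF (g i) = S.val :=
  Iff.rfl

theorem forestTuples_empty (r : ℕ) : forestTuples ∅ r = {fun _ => []} := by
  ext g
  simp [mem_forestTuples, sum_eq_zero_iff, labelsPF_eq_zero_iff, funext_iff]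

theorem insertNth_mem_forestTuples_iff (j : Fin (r + 1)) {f : List PT} {g : Fin r → List PT} :
    (j.insertNth f g : Fin (r + 1) → List PT) ∈ forestTuples S (r + 1) ↔
      labelsPF f + ∑ i, labelsPF (g i) = S.val := by
  simp [mem_forestTuples, Fin.sum_univ_succAbove _ j]

theorem bijOn_insertNth_markedForestTuples (hm : m ∈ S) (r : ℕ) :
    Set.BijOn (fun x : Fin (r + 1) × (List PT × (Fin r → List PT)) =>
        (x.1.insertNth x.2.1 x.2.2 : Fin (r + 1) → List PT))
      {x | x.1 ∈ univ ∧ x.2 ∈ markedForestTuples m S r} (forestTuples S (r + 1)) := by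
  refine ⟨fun x hx => (insertNth_mem_forestTuples_iff x.1).2 hx.2.2, ?_, ?_⟩
  · rintro ⟨j, f, g⟩ ⟨-, hm, hS⟩ ⟨j', f', g'⟩ ⟨-, hm', -⟩ h
    dsimp only at h hm hm'
    have hnodup := S.nodup
    rw [← mem_forestTuples.1 ((insertNth_mem_forestTuples_iff j).2 hS)] at hnodup
    obtain rfl : j = j' := eq_of_mem_of_nodup_sum hnodup (mem_univ j) (mem_univ j')
      (by simpa using hm) (by simpa [h] using hm')
    obtain ⟨rfl, rfl⟩ := Fin.insertNth_injective2 h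
    rfl
  · intro g hg
    obtain ⟨j, -, hj⟩ : ∃ j ∈ univ, m ∈ labelsPF (g j) := by
      rwa [← Multiset.mem_sum, mem_forestTuples.1 hg]
    have hinsert := Fin.insertNth_self_removeNth j g
    exact ⟨(j, g j, j.removeNth g), ⟨mem_univ j, hj,
      (insertNth_mem_forestTuples_iff j).1 (hinsert.symm ▸ hg)⟩, hinsert⟩

/-- Puts the tree between the first two forests of the tuple, giving a single forest. -/
def graft (x : PT × (Fin (r + 2) → List PT)) : List PT × (Fin r → List PT) :=
  (x.2 0 ++ x.1 :: x.2 1, fun i => x.2 i.succ.succ)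

theorem labels_graft (x : PT × (Fin (r + 2) → List PT)) :
    labelsPF (graft x).1 + ∑ i, labelsPF ((graft x).2 i) =
      x.1.labels + ∑ i, labelsPF (x.2 i) := by
  simp only [graft, labelsPF_append_cons, Fin.sum_univ_succ, Fin.succ_zero_eq_one]
  abel

theorem pv_graft (x : PT × (Fin (r + 2) → List PT)) :
    pvPF (graft x).1 + ∑ i, pvPF ((graft x).2 i) = x.1.pv + ∑ i, pvPF (x.2 i) := by
  simp only [graft, pvPF_append_cons, Fin.sum_univ_succ, Fin.succ_zero_eq_one]
  abel

theorem bijOn_graft (m : ℕ) (S : Finset ℕ) (r : ℕ) :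
    Set.BijOn graft (markedTreeTuples m S (r + 2)) (markedForestTuples m S r) := by
  refine ⟨?_, ?_, ?_⟩
  · rintro x ⟨hm, hS⟩
    exact ⟨mem_labelsPF.2 ⟨x.1, by simp [graft], hm⟩, (labels_graft x).trans hS⟩
  · rintro ⟨P, g⟩ ⟨hP, hS⟩ ⟨P', g'⟩ ⟨hP', -⟩ h
    have hnodup := S.nodup
    rw [← hS, ← labels_graft] at hnodup
    obtain ⟨hforest, hrest⟩ := Prod.ext_iff.1 h
    obtain ⟨h0, rfl, h1⟩ :=
      (append_cons_inj_of_nodup_sum (Multiset.nodup_add.1 hnodup).1 hP hP').1 hforest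
    refine Prod.ext rfl (funext fun i => ?_)
    exact Fin.cases h0 (Fin.cases h1 (congrFun hrest)) i
  · rintro ⟨f, g⟩ ⟨hm, hS⟩
    obtain ⟨P, hP, hmP⟩ := mem_labelsPF.1 hm
    obtain ⟨L, R, rfl⟩ := List.append_of_mem hP
    exact ⟨(P, Fin.cons L (Fin.cons R g)), ⟨hmP, (labels_graft _).symm.trans hS⟩, rfl⟩

theorem node_mem_markedTreeTuples_iff {v : ℕ} {ch : List PT} {g : Fin k → List PT} :
    (PT.node v ch, g) ∈ markedTreeTuples m S k ↔
      (m = v ∨ m ∈ labelsPF ch) ∧ v ∈ S ∧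
        labelsPF ch + ∑ i, labelsPF (g i) = (S.erase v).val := by
  simp [markedTreeTuples, PT.labels_node, multiset_cons_eq_val_iff]

theorem bijOn_node_forestTuples (hm : m ∈ S) (k : ℕ) :
    Set.BijOn (fun g : Fin (k + 1) → List PT => (PT.node m (g 0), (Fin.tail g : Fin k → List PT)))
      (forestTuples (S.erase m) (k + 1)) {x ∈ markedTreeTuples m S k | x.1.root = m} := by
  refine ⟨?_, ?_, ?_⟩
  · intro g hg
    rw [mem_forestTuples, Fin.sum_univ_succ] at hg
    exact ⟨node_mem_markedTreeTuples_iff.2 ⟨.inl rfl, hm, hg⟩, rfl⟩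
  · intro g _ g' _ h
    simp only [Prod.mk.injEq, PT.node.injEq, true_and] at h
    rw [← Fin.cons_self_tail g, ← Fin.cons_self_tail g', h.1, h.2]
  · rintro ⟨⟨v, ch⟩, g⟩ ⟨hx, rfl⟩
    refine ⟨Fin.cons ch g, ?_, rfl⟩
    rw [mem_forestTuples, Fin.sum_univ_succ]
    exact (node_mem_markedTreeTuples_iff.1 hx).2.2

theorem bijOn_node_markedForestTuples (m : ℕ) (S : Finset ℕ) (k : ℕ) :
    Set.BijOn (fun x : ℕ × (List PT × (Fin k → List PT)) => (PT.node x.1 x.2.1, x.2.2))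
      {x | x.1 ∈ S.erase m ∧ x.2 ∈ markedForestTuples m (S.erase x.1) k}
      {x ∈ markedTreeTuples m S k | x.1.root ≠ m} := by
  refine ⟨?_, ?_, ?_⟩
  · rintro ⟨v, ch, g⟩ ⟨hv, hm, hS⟩
    exact ⟨node_mem_markedTreeTuples_iff.2 ⟨.inr hm, mem_of_mem_erase hv, hS⟩,
      ne_of_mem_erase hv⟩
  · rintro ⟨v, ch, g⟩ _ ⟨v', ch', g'⟩ _ h
    simpa [and_assoc] using h
  · rintro ⟨⟨v, ch⟩, g⟩ ⟨hx, hv⟩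
    obtain ⟨hm, hvS, hS⟩ := node_mem_markedTreeTuples_iff.1 hx
    exact ⟨(v, ch, g), ⟨mem_erase.2 ⟨hv, hvS⟩, hm.resolve_left (Ne.symm hv), hS⟩, rfl⟩

theorem bijOn_fst_markedTreeTuples_zero (hm : m ∈ S) :
    Set.BijOn Prod.fst (markedTreeTuples m S 0) {P | P.labels = S.val} := by
  refine ⟨?_, fun x _ y _ h => Prod.ext h (Subsingleton.elim _ _), ?_⟩
  · rintro x ⟨-, hS⟩
    simpa using hS
  · intro P hP
    refine ⟨(P, Fin.elim0), ⟨?_, by simpa using hP⟩, rfl⟩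
    rwa [show P.labels = S.val from hP]

end Tuples

section Recurrences

variable {R : Type*} [CommSemiring R] {t q q' : R} {S : Finset ℕ} {m n r k : ℕ}

theorem hasEnumerator_forestTuples_empty (r : ℕ) (t : R) :
    HasEnumerator (forestTuples ∅ r) (fun g => ∑ i, pvPF (g i)) t 1 := by
  rw [forestTuples_empty]
  simpa [pvPF] using
    HasEnumerator.singleton (fun _ => []) (fun g : Fin r → List PT => ∑ i, pvPF (g i)) t

theorem hasEnumerator_forestTuples_succ (hm : m ∈ S)
    (h : HasEnumerator (markedForestTuples m S r) (fun x => pvPF x.1 + ∑ i, pvPF (x.2 i)) t q) :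
    HasEnumerator (forestTuples S (r + 1)) (fun g => ∑ i, pvPF (g i)) t ((r + 1 : ℕ) * q) := by
  have hslots := HasEnumerator.fiberwise (I := (univ : Finset (Fin (r + 1))))
    (stat := fun x : Fin (r + 1) × List PT × (Fin r → List PT) =>
      pvPF x.2.1 + ∑ i, pvPF (x.2.2 i)) fun _ _ => h
  rw [sum_const, card_univ, Fintype.card_fin, nsmul_eq_mul] at hslots
  refine hslots.of_bijOn (bijOn_insertNth_markedForestTuples hm r) ?_
  rintro ⟨j, f, g⟩ -
  simp [Fin.sum_univ_succAbove _ j]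

theorem hasEnumerator_markedForestTuples
    (h : HasEnumerator (markedTreeTuples m S (r + 2)) (fun x => x.1.pv + ∑ i, pvPF (x.2 i)) t q) :
    HasEnumerator (markedForestTuples m S r) (fun x => pvPF x.1 + ∑ i, pvPF (x.2 i)) t q :=
  h.of_bijOn (bijOn_graft m S r) fun x _ => pv_graft x

theorem hasEnumerator_markedTreeTuples_root_eq (hm : IsLeast (S : Set ℕ) m)
    (h : HasEnumerator (forestTuples (S.erase m) (k + 1)) (fun g => ∑ i, pvPF (g i)) t q) :
    HasEnumerator {x ∈ markedTreeTuples m S k | x.1.root = m}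
      (fun x => x.1.pv + ∑ i, pvPF (x.2 i)) t (t * q) := by
  have hproperRoot := h.const_add 1
  rw [pow_one] at hproperRoot
  refine hproperRoot.of_bijOn (bijOn_node_forestTuples hm.1 k) fun g hg => ?_
  have hproper : ∀ b ∈ labelsPF (g 0), m ≤ b := by
    intro b hb
    have hbS : b ∈ S.erase m := by
      rw [← mem_val, ← mem_forestTuples.1 hg]
      exact Multiset.mem_sum.2 ⟨0, mem_univ 0, hb⟩
    exact hm.2 (mem_of_mem_erase hbS)
  rw [PT.pv_node_of_forall_le hproper, Fin.sum_univ_succ, add_assoc]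
  rfl

theorem hasEnumerator_markedTreeTuples_root_ne (hm : IsLeast (S : Set ℕ) m)
    (h : ∀ v ∈ S.erase m, HasEnumerator (markedForestTuples m (S.erase v) k)
      (fun x => pvPF x.1 + ∑ i, pvPF (x.2 i)) t q) :
    HasEnumerator {x ∈ markedTreeTuples m S k | x.1.root ≠ m}
      (fun x => x.1.pv + ∑ i, pvPF (x.2 i)) t (#(S.erase m) * q) := by
  have hroots := HasEnumerator.fiberwise
    (stat := fun x : ℕ × List PT × (Fin k → List PT) =>
      pvPF x.2.1 + ∑ i, pvPF (x.2.2 i)) h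
  rw [sum_const, nsmul_eq_mul] at hroots
  refine hroots.of_bijOn (bijOn_node_markedForestTuples m S k) ?_
  rintro ⟨v, ch, g⟩ ⟨hv, hmch, -⟩
  have hmv : m < v := (hm.2 (mem_of_mem_erase hv)).lt_of_ne (ne_of_mem_erase hv).symm
  rw [PT.pv_node_of_lt hmch hmv]

theorem hasEnumerator_markedTreeTuples_of_erase (hm : IsLeast (S : Set ℕ) m)
    (hroot : HasEnumerator (forestTuples (S.erase m) (k + 1)) (fun g => ∑ i, pvPF (g i)) t q)
    (hne : ∀ v ∈ S.erase m, HasEnumerator (markedForestTuples m (S.erase v) k)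
      (fun x => pvPF x.1 + ∑ i, pvPF (x.2 i)) t q') :
    HasEnumerator (markedTreeTuples m S k) (fun x => x.1.pv + ∑ i, pvPF (x.2 i)) t
      (t * q + #(S.erase m) * q') := by
  have hunion := (hasEnumerator_markedTreeTuples_root_eq hm hroot).union
    (hasEnumerator_markedTreeTuples_root_ne hm hne)
    (Set.disjoint_left.2 fun _ hx hx' => hx'.2 hx.2)
  rwa [← Set.sep_or, Set.sep_eq_self_iff_mem_true.2 fun _ _ => em _] at hunion

/-- The enumerator by proper vertices of the pairs of a plane tree containing the least label and
a `k`-tuple of plane forests, with `n + 1` labels in total. -/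
def markedTreeEnumerator (t : R) (n k : ℕ) : R :=
  t * ∏ i ∈ range n, ((2 * i + k + 1 : ℕ) * t + ((n - i : ℕ) : R))

theorem markedTreeEnumerator_succ (t : R) (n k : ℕ) :
    markedTreeEnumerator t (n + 1) k =
      ((k + 1 : ℕ) * t + ((n + 1 : ℕ) : R)) * markedTreeEnumerator t n (k + 2) := by
  have hshift : ∀ i, 2 * (i + 1) + k + 1 = 2 * i + (k + 2) + 1 := fun i => by ring
  simp only [markedTreeEnumerator, prod_range_succ', hshift, Nat.add_sub_add_right, mul_zero,
    zero_add, Nat.sub_zero]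
  ring

theorem hasEnumerator_markedTreeTuples (hS : #S = n + 1) (hm : IsLeast (S : Set ℕ) m) (k : ℕ)
    (t : R) :
    HasEnumerator (markedTreeTuples m S k) (fun x => x.1.pv + ∑ i, pvPF (x.2 i)) t
      (markedTreeEnumerator t n k) := by
  induction n generalizing S m k with
  | zero =>
    have hempty : S.erase m = ∅ := by
      rw [← card_eq_zero, card_erase_of_mem hm.1, hS]
    have h := hasEnumerator_markedTreeTuples_of_erase (k := k) (q' := 0) hm
      (hempty ▸ hasEnumerator_forestTuples_empty (k + 1) t) (by simp [hempty])
    simpa [markedTreeEnumerator] using h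
  | succ n ih =>
    have hcard : ∀ v ∈ S, #(S.erase v) = n + 1 := fun v hv => by
      rw [card_erase_of_mem hv, hS, Nat.add_sub_cancel]
    have hmarked : ∀ {v l}, v ∈ S → IsLeast (S.erase v : Set ℕ) l →
        HasEnumerator (markedForestTuples l (S.erase v) k)
          (fun x => pvPF x.1 + ∑ i, pvPF (x.2 i)) t (markedTreeEnumerator t n (k + 2)) :=
      fun hv hl => hasEnumerator_markedForestTuples (ih (hcard _ hv) hl (k + 2))
    have hne : (S.erase m).Nonempty := card_pos.1 (by simp [hcard m hm.1])
    have hroot := hasEnumerator_forestTuples_succ (min'_mem _ hne)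
      (hmarked hm.1 (isLeast_min' _ hne))
    have hleast : ∀ v ∈ S.erase m, IsLeast (S.erase v : Set ℕ) m := fun v hv =>
      ⟨mem_erase.2 ⟨(ne_of_mem_erase hv).symm, hm.1⟩, fun b hb => hm.2 (mem_of_mem_erase hb)⟩
    have h := hasEnumerator_markedTreeTuples_of_erase hm hroot
      fun v hv => hmarked (mem_of_mem_erase hv) (hleast v hv)
    rw [hcard m hm.1] at h
    rw [markedTreeEnumerator_succ]
    convert h using 1
    ring

theorem hasEnumerator_setOf_labels_eq (hS : #S = n + 1) (t : R) :
    HasEnumerator {P : PT | P.labels = S.val} PT.pv t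
      (t * ∏ i ∈ range n, ((2 * i + 1 : ℕ) * t + ((n - i : ℕ) : R))) := by
  have hne : S.Nonempty := card_pos.1 (by simp [hS])
  exact (hasEnumerator_markedTreeTuples hS (isLeast_min' S hne) 0 t).of_bijOn
    (bijOn_fst_markedTreeTuples_zero (min'_mem S hne)) fun x _ => by simp

end Recurrences

theorem prod_range_eq_factorial_mul_catalan (n : ℕ) :
    ∏ i ∈ range n, (2 * i + 1 + (n - i)) = (n + 1).factorial * catalan n := by
  calc ∏ i ∈ range n, (2 * i + 1 + (n - i))
      = ∏ i ∈ range n, (n + 1 + i) :=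
        prod_congr rfl fun i hi => by have := mem_range.1 hi; omega
    _ = n.factorial * n.centralBinom := by
        rw [← Nat.ascFactorial_eq_prod_range, Nat.ascFactorial_eq_factorial_mul_choose, ← two_mul,
          Nat.centralBinom]
    _ = (n + 1).factorial * catalan n := by
        rw [← succ_mul_catalan_eq_centralBinom, Nat.factorial_succ]
        ring

theorem cast_catalan_eq_inv_mul_choose {K : Type*} [DivisionRing K] [CharZero K] (n : ℕ) :
    (catalan n : K) = 1 / (n + 1) * (2 * n).choose n := by
  have h : ((n : K) + 1) * catalan n = (2 * n).choose n :=
    mod_cast succ_mul_catalan_eq_centralBinom n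
  rw [← h, ← mul_assoc, one_div_mul_cancel n.cast_add_one_ne_zero, one_mul]

theorem planeTree_poly_general {R : Type*} [CommSemiring R] {S : Finset ℕ} {n : ℕ}
    (hS : #S = n + 1) :
    (∀ t : R, ∑ᶠ P : {P : PT // P.labels = S.val}, t ^ P.1.pv =
        t * ∏ i ∈ range n, ((2 * i + 1 : ℕ) * t + ((n - i : ℕ) : R))) ∧
      Nat.card {P : PT // P.labels = S.val} = (n + 1).factorial * catalan n := by
  refine ⟨fun t => ?_, ?_⟩
  · rw [← (hasEnumerator_setOf_labels_eq hS t).finsum_mem_eq]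
    exact finsum_set_coe_eq_finsum_mem (f := fun P => t ^ P.pv) {P : PT | P.labels = S.val}
  · refine (hasEnumerator_setOf_labels_eq hS 1).natCard_eq.trans ?_
    simp [← prod_range_eq_factorial_mul_catalan]

/-- For `n ≥ 1`, `Σ_{P ∈ 𝒫_{n+1}} t^{pv(P)} = t · Π_{i=0}^{n-1} ((2i+1)·t + (n-i))`;
in particular (at `t = 1`) the number of plane trees on `[n+1]` is
`(n+1)! · C_n` where `C_n = (1/(n+1)) · binom(2n,n)` is the `n`-th Catalan number. -/
theorem planeTree_poly (n : ℕ) (hn : 1 ≤ n) :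
    (∀ t : ℚ, (∑ᶠ P : PTn (n + 1), t ^ P.1.pv) =
        t * ∏ i ∈ Finset.range n, ((2 * i + 1 : ℕ) * t + ((n - i : ℕ) : ℚ))) ∧
      (Nat.card (PTn (n + 1)) : ℚ) =
        (n + 1).factorial * ((1 : ℚ) / (n + 1)) * ((2 * n).choose n) := by
  obtain ⟨hpoly, hcard⟩ := planeTree_poly_general (R := ℚ) (n := n) (S := Icc 1 (n + 1)) (by simp)
  exact ⟨hpoly, by rw [mul_assoc, ← cast_catalan_eq_inv_mul_choose]; exact mod_cast hcard⟩
end
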